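/- Let H be a complex Hilbert space with grading operator ε (ε self-adjoint, ε² = 1) and F a bounded operator with F² = 1 and Fε = −εF. If θ is a bounded odd operator on H (εθ = −θε) such that the graded commutator [F,θ] = Fθ + θF is trace class, then Tr_s(θ) := (1/2)·Trace(εF[F,θ]) = 0. -/

import Mathlib

open scoped ENNReal

noncomputable section

variable {H : Type*} [NormedAddCommGroup H] [InnerProductSpace ℂ H] [CompleteSpace H]

/-- The `n`-th singular value of a (compact) operator `T`, described via approximation
numbers: the distance from `T` to the operators of rank at most `n`.  For a compact operator
on a Hilbert space this agrees with the `(n+1)`-st largest eigenvalue of `√(T*T)`. -/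
def sval (T : H →L[ℂ] H) (n : ℕ) : ℝ :=
  sInf {c : ℝ | ∃ R : H →L[ℂ] H,
    Module.rank ℂ (LinearMap.range (R : H →ₗ[ℂ] H)) ≤ (n : Cardinal) ∧ c = ‖T - R‖}

/-- The `p`-Schatten norm `‖T‖_p = (Σ_n s_n(T)^p)^(1/p)`, valued in `ℝ≥0∞`. -/
def schattenNorm (p : ℝ) (T : H →L[ℂ] H) : ℝ≥0∞ :=
  (∑' n : ℕ, ENNReal.ofReal (sval T n ^ p)) ^ (1 / p)

/-- `T` belongs to the `p`-th Schatten class: it is compact with finite `p`-Schatten norm. -/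
def MemSchatten (p : ℝ) (T : H →L[ℂ] H) : Prop :=
  IsCompactOperator (⇑T) ∧ schattenNorm p T < ⊤

/-- The trace `Σ_i ⟪e_i, T e_i⟫` of an operator, computed in a (choice of) Hilbert basis of
`H`.  For a trace-class operator this is the trace, independent of the choice of basis. -/
def opTrace (T : H →L[ℂ] H) : ℂ :=
  ∑' i : (exists_hilbertBasis ℂ H).choose,
    @inner ℂ H _ ((exists_hilbertBasis ℂ H).choose_spec.choose i)
      (T ((exists_hilbertBasis ℂ H).choose_spec.choose i))

/-!
A trace-class operator is an absolutely convergent series of operators `x ↦ f k x • y k` of rank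
one. Hence its trace in any Hilbert basis is `∑ f k (y k)`, and this expression is cyclic:
`A * T` and `T * A` both yield `∑ f k (A (y k))`.

Now let `C = Fθ + θF`. Both `F` and `θ` anticommute with `ε`, so `C` commutes with it, and
cyclicity gives `Tr(εFC) = Tr(FCε) = Tr(FεC) = -Tr(εFC)`.
-/

section Nuclear

variable {𝕜 E F G : Type*} [NontriviallyNormedField 𝕜] [NormedAddCommGroup E] [NormedSpace 𝕜 E]
  [NormedAddCommGroup F] [NormedSpace 𝕜 F] [NormedAddCommGroup G] [NormedSpace 𝕜 G]
  {ι : Type*} {T : E →L[𝕜] F} {f : ι → StrongDual 𝕜 E} {y : ι → F}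

/-- The functionals `f k` and the vectors `y k` form a nuclear representation `T = ∑ f k ⊗ y k`.
The series is required to converge in operator norm, which for complete `F` is automatic from
the first field. -/
structure IsNuclearRep (T : E →L[𝕜] F) (f : ι → StrongDual 𝕜 E) (y : ι → F) : Prop where
  summable_norm_mul_norm : Summable fun k => ‖f k‖ * ‖y k‖
  hasSum_smulRight : HasSum (fun k => (f k).smulRight (y k)) T

/-- `T` is a nuclear operator in the sense of Grothendieck: it has a nuclear representation.
Only countably many terms of such a series are nonzero, so indexing by a `Type` loses nothing. -/
def IsNuclear (T : E →L[𝕜] F) : Prop :=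
  ∃ (ι : Type) (f : ι → StrongDual 𝕜 E) (y : ι → F), IsNuclearRep T f y

theorem IsNuclearRep.hasSum_apply (h : IsNuclearRep T f y) (x : E) :
    HasSum (fun k => f k x • y k) (T x) :=
  h.hasSum_smulRight.mapL (ContinuousLinearMap.apply 𝕜 F x)

theorem IsNuclearRep.clm_comp (h : IsNuclearRep T f y) (A : F →L[𝕜] G) :
    IsNuclearRep (A ∘L T) f (fun k => A (y k)) where
  summable_norm_mul_norm := by
    refine .of_nonneg_of_le (fun k => by positivity) (fun k => ?_)
      (h.summable_norm_mul_norm.mul_left ‖A‖)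
    calc ‖f k‖ * ‖A (y k)‖ ≤ ‖f k‖ * (‖A‖ * ‖y k‖) := by gcongr; exact A.le_opNorm _
      _ = ‖A‖ * (‖f k‖ * ‖y k‖) := by ring
  hasSum_smulRight := by
    convert! h.hasSum_smulRight.mapL (ContinuousLinearMap.compL 𝕜 E F G A) using 2
    ext x
    simp

theorem IsNuclearRep.comp_clm (h : IsNuclearRep T f y) (B : G →L[𝕜] E) :
    IsNuclearRep (T ∘L B) (fun k => f k ∘L B) y where
  summable_norm_mul_norm := by
    refine .of_nonneg_of_le (fun k => by positivity) (fun k => ?_)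
      (h.summable_norm_mul_norm.mul_left ‖B‖)
    calc ‖f k ∘L B‖ * ‖y k‖ ≤ ‖f k‖ * ‖B‖ * ‖y k‖ := by gcongr; exact (f k).opNorm_comp_le B
      _ = ‖B‖ * (‖f k‖ * ‖y k‖) := by ring
  hasSum_smulRight := h.hasSum_smulRight.mapL ((ContinuousLinearMap.compL 𝕜 G E F).flip B)

theorem IsNuclear.clm_comp (h : IsNuclear T) (A : F →L[𝕜] G) : IsNuclear (A ∘L T) :=
  let ⟨ι, f, y, hfy⟩ := h
  ⟨ι, f, fun k => A (y k), hfy.clm_comp A⟩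

end Nuclear

section FiniteRank

variable {𝕜 E F : Type*} [RCLike 𝕜] [NormedAddCommGroup E] [NormedSpace 𝕜 E]
  [NormedAddCommGroup F] [InnerProductSpace 𝕜 F]

theorem exists_eq_sum_smulRight_of_rank_le {R : E →L[𝕜] F} {n : ℕ}
    (hR : LinearMap.rank (R : E →ₗ[𝕜] F) ≤ n) :
    ∃ d ≤ n, ∃ (f : Fin d → StrongDual 𝕜 E) (y : Fin d → F),
      (∀ k, ‖f k‖ ≤ ‖R‖) ∧ (∀ k, ‖y k‖ = 1) ∧ R = ∑ k, (f k).smulRight (y k) := by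
  have : FiniteDimensional 𝕜 (LinearMap.range (R : E →ₗ[𝕜] F)) :=
    Module.rank_lt_aleph0_iff.mp (hR.trans_lt Cardinal.natCast_lt_aleph0)
  let b := stdOrthonormalBasis 𝕜 (LinearMap.range (R : E →ₗ[𝕜] F))
  have hb (k) : ‖(b k : F)‖ = 1 := b.norm_eq_one k
  refine ⟨_, Module.finrank_le_of_rank_le hR, fun k => innerSL 𝕜 (b k : F) ∘L R, fun k => b k,
    fun k => ?_, hb, ?_⟩
  · calc ‖innerSL 𝕜 (b k : F) ∘L R‖ ≤ ‖innerSL 𝕜 (b k : F)‖ * ‖R‖ :=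
          ContinuousLinearMap.opNorm_comp_le _ _
      _ = ‖R‖ := by rw [innerSL_apply_norm, hb, one_mul]
  · ext x
    have expansion := congrArg Subtype.val (b.sum_repr' ⟨R x, LinearMap.mem_range_self _ x⟩)
    simpa using expansion.symm

variable [CompleteSpace F] {T : E →L[𝕜] F}

theorem isNuclear_of_hasSum_of_rank_le {α : Type} {D : α → E →L[𝕜] F} {m : α → ℕ}
    (hrank : ∀ n, LinearMap.rank (D n : E →ₗ[𝕜] F) ≤ m n)
    (hsum : Summable fun n => m n * ‖D n‖) (hT : HasSum D T) : IsNuclear T := by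
  choose d hd f y hf hy hD using fun n => exists_eq_sum_smulRight_of_rank_le (hrank n)
  have summable_norm : Summable fun k : Σ n, Fin (d n) => ‖f k.1 k.2‖ * ‖y k.1 k.2‖ := by
    refine (summable_sigma_of_nonneg fun k => by positivity).2
      ⟨fun n => (hasSum_fintype _).summable, ?_⟩
    refine .of_nonneg_of_le (fun n => tsum_nonneg fun k => by positivity) (fun n => ?_) hsum
    calc ∑' k, ‖f n k‖ * ‖y n k‖ = ∑ k, ‖f n k‖ := by simp only [tsum_fintype, hy, mul_one]
      _ ≤ d n * ‖D n‖ := by simpa using Finset.sum_le_sum fun k (_ : k ∈ Finset.univ) => hf n k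
      _ ≤ m n * ‖D n‖ := by gcongr; exact hd n
  refine ⟨_, _, _, summable_norm, hT.sigma_of_hasSum (fun n => ?_) (.of_norm ?_)⟩
  · rw [hD n]
    exact hasSum_fintype _
  · simpa only [ContinuousLinearMap.norm_smulRight_apply] using summable_norm

theorem isNuclear_of_rank_le_two_pow {R : ℕ → E →L[𝕜] F} (hzero : R 0 = 0)
    (hrank : ∀ n, LinearMap.rank (R n : E →ₗ[𝕜] F) ≤ (2 ^ n : ℕ))
    (hsum : Summable fun n => 2 ^ n * ‖T - R n‖) : IsNuclear T := by
  have rank_diff (n : ℕ) :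
      LinearMap.rank ((R (n + 1) - R n : E →L[𝕜] F) : E →ₗ[𝕜] F) ≤ (2 ^ (n + 1) + 2 ^ n : ℕ) := by
    rw [ContinuousLinearMap.toLinearMap_sub, sub_eq_add_neg, Nat.cast_add]
    refine (LinearMap.rank_add_le _ _).trans (add_le_add (hrank _) ?_)
    rw [LinearMap.rank, LinearMap.range_neg]
    exact hrank n
  have norm_diff (n : ℕ) : ‖R (n + 1) - R n‖ ≤ ‖T - R n‖ + ‖T - R (n + 1)‖ := by
    simpa using norm_sub_le (T - R n) (T - R (n + 1))
  have summable_diff :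
      Summable fun n => ((2 ^ (n + 1) + 2 ^ n : ℕ) : ℝ) * ‖R (n + 1) - R n‖ := by
    refine .of_nonneg_of_le (fun n => by positivity) (fun n => ?_)
      ((hsum.mul_left 3).add (((summable_nat_add_iff 1).2 hsum).mul_left (3 / 2)))
    calc ((2 ^ (n + 1) + 2 ^ n : ℕ) : ℝ) * ‖R (n + 1) - R n‖
        ≤ ((2 ^ (n + 1) + 2 ^ n : ℕ) : ℝ) * (‖T - R n‖ + ‖T - R (n + 1)‖) := by
          gcongr; exact norm_diff n
      _ = 3 * (2 ^ n * ‖T - R n‖) + 3 / 2 * (2 ^ (n + 1) * ‖T - R (n + 1)‖) := by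
          push_cast; ring
  have tendsto_R : Filter.Tendsto R Filter.atTop (nhds T) := by
    rw [tendsto_iff_norm_sub_tendsto_zero]
    refine squeeze_zero (fun n => norm_nonneg _) (fun n => ?_) hsum.tendsto_atTop_zero
    rw [norm_sub_rev]
    exact le_mul_of_one_le_left (norm_nonneg _) (one_le_pow₀ one_le_two)
  have hasSum_diff : HasSum (fun n => R (n + 1) - R n) T := by
    have : Summable fun n => R (n + 1) - R n := .of_norm_bounded summable_diff fun n =>
      le_mul_of_one_le_left (norm_nonneg _) (mod_cast Nat.le_add_left_of_le Nat.one_le_two_pow)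
    simpa only [this.hasSum_iff_tendsto_nat, Finset.sum_range_sub, hzero, sub_zero]
  exact isNuclear_of_hasSum_of_rank_le rank_diff summable_diff hasSum_diff

end FiniteRank

section Trace

variable {𝕜 E ι κ : Type*} [RCLike 𝕜] [NormedAddCommGroup E] [InnerProductSpace 𝕜 E]

theorem sum_norm_inner_mul_norm_inner_le {b : κ → E} (hb : Orthonormal 𝕜 b) (x y : E)
    (s : Finset κ) : ∑ i ∈ s, ‖inner 𝕜 x (b i)‖ * ‖inner 𝕜 (b i) y‖ ≤ ‖x‖ * ‖y‖ := by
  have bessel (z : E) : √(∑ i ∈ s, ‖inner 𝕜 (b i) z‖ ^ 2) ≤ ‖z‖ :=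
    Real.sqrt_le_iff.2 ⟨norm_nonneg _, hb.sum_inner_products_le z⟩
  calc ∑ i ∈ s, ‖inner 𝕜 x (b i)‖ * ‖inner 𝕜 (b i) y‖
      ≤ √(∑ i ∈ s, ‖inner 𝕜 (b i) x‖ ^ 2) * √(∑ i ∈ s, ‖inner 𝕜 (b i) y‖ ^ 2) := by
        simpa only [norm_inner_symm x] using Real.sum_mul_le_sqrt_mul_sqrt s _ _
    _ ≤ ‖x‖ * ‖y‖ := by gcongr <;> exact bessel _

variable [CompleteSpace E] {T : E →L[𝕜] E} {f : ι → StrongDual 𝕜 E} {y : ι → E}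

theorem IsNuclearRep.summable_apply_mul_inner (h : IsNuclearRep T f y) {b : κ → E}
    (hb : Orthonormal 𝕜 b) : Summable fun p : ι × κ => f p.1 (b p.2) * inner 𝕜 (b p.2) (y p.1) := by
  have sum_le (k : ι) (s : Finset κ) :
      ∑ i ∈ s, ‖f k (b i) * inner 𝕜 (b i) (y k)‖ ≤ ‖f k‖ * ‖y k‖ := by
    obtain ⟨x, hx⟩ := (InnerProductSpace.toDual 𝕜 E).surjective (f k)
    simpa [← hx] using sum_norm_inner_mul_norm_inner_le hb x (y k) s
  refine .of_norm ((summable_prod_of_nonneg fun _ => norm_nonneg _).2 ⟨fun k => ?_, ?_⟩)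
  · exact summable_of_sum_le (fun _ => norm_nonneg _) (sum_le k)
  · exact .of_nonneg_of_le (fun k => tsum_nonneg fun _ => norm_nonneg _)
      (fun k => Real.tsum_le_of_sum_le (fun _ => norm_nonneg _) (sum_le k))
      h.summable_norm_mul_norm

theorem IsNuclearRep.hasSum_inner_apply (h : IsNuclearRep T f y) (b : HilbertBasis κ 𝕜 E) :
    HasSum (fun i => inner 𝕜 (b i) (T (b i))) (∑' k, f k (y k)) := by
  have hdouble := (h.summable_apply_mul_inner b.orthonormal).hasSum
  have hrow (k : ι) : HasSum (fun i => f k (b i) * inner 𝕜 (b i) (y k)) (f k (y k)) := by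
    simpa [b.repr_apply_apply, mul_comm] using (b.hasSum_repr (y k)).mapL (f k)
  have hcolumn (i : κ) :
      HasSum (fun k => f k (b i) * inner 𝕜 (b i) (y k)) (inner 𝕜 (b i) (T (b i))) := by
    simpa [inner_smul_right] using (h.hasSum_apply (b i)).mapL (innerSL 𝕜 (b i))
  rw [(hdouble.prod_fiberwise hrow).tsum_eq]
  exact ((Equiv.prodComm κ ι).hasSum_iff.2 hdouble).prod_fiberwise hcolumn

end Trace

theorem IsNuclearRep.opTrace_eq {ι : Type*} {T : H →L[ℂ] H} {f : ι → StrongDual ℂ H} {y : ι → H}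
    (h : IsNuclearRep T f y) : opTrace T = ∑' k, f k (y k) :=
  (h.hasSum_inner_apply _).tsum_eq

theorem IsNuclear.opTrace_mul_comm {T : H →L[ℂ] H} (h : IsNuclear T) (A : H →L[ℂ] H) :
    opTrace (A * T) = opTrace (T * A) := by
  obtain ⟨ι, f, y, hfy⟩ := h
  calc opTrace (A * T) = ∑' k, f k (A (y k)) := (hfy.clm_comp A).opTrace_eq
    _ = opTrace (T * A) := (hfy.comp_clm A).opTrace_eq.symm

theorem opTrace_neg (T : H →L[ℂ] H) : opTrace (-T) = -opTrace T := by
  simp only [opTrace, neg_apply, inner_neg_right, tsum_neg]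

section SingularValues

variable {E : Type*} [NormedAddCommGroup E] [InnerProductSpace ℂ E] (T : E →L[ℂ] E)

theorem sval_nonneg (n : ℕ) : 0 ≤ sval T n :=
  Real.sInf_nonneg fun _ ⟨_, _, hc⟩ => hc ▸ norm_nonneg _

theorem sval_le_norm_sub {R : E →L[ℂ] E} {n : ℕ} (hR : LinearMap.rank (R : E →ₗ[ℂ] E) ≤ n) :
    sval T n ≤ ‖T - R‖ :=
  csInf_le ⟨0, fun _ ⟨_, _, hc⟩ => hc ▸ norm_nonneg _⟩ ⟨R, hR, rfl⟩

theorem exists_rank_le_norm_sub_lt (n : ℕ) {δ : ℝ} (hδ : 0 < δ) :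
    ∃ R : E →L[ℂ] E, LinearMap.rank (R : E →ₗ[ℂ] E) ≤ n ∧ ‖T - R‖ < sval T n + δ := by
  obtain ⟨_, ⟨R, hR, rfl⟩, hlt⟩ := Real.lt_sInf_add_pos
    (s := {c : ℝ | ∃ R : E →L[ℂ] E, LinearMap.rank (R : E →ₗ[ℂ] E) ≤ n ∧ c = ‖T - R‖})
    ⟨‖T - 0‖, 0, by simp, rfl⟩ hδ
  exact ⟨R, hR, hlt⟩

theorem sval_antitone : Antitone (sval T) := fun m _ hmn =>
  le_of_forall_pos_le_add fun _ hδ =>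
    let ⟨_, hrank, hlt⟩ := exists_rank_le_norm_sub_lt T m hδ
    (sval_le_norm_sub T (hrank.trans (mod_cast hmn))).trans hlt.le

variable {T}

theorem MemSchatten.summable_sval_rpow {p : ℝ} (hp : 0 < p) (h : MemSchatten p T) :
    Summable fun n => sval T n ^ p := by
  have tsum_lt_top : ∑' n, ENNReal.ofReal (sval T n ^ p) < ⊤ :=
    (ENNReal.rpow_lt_top_iff_of_pos (one_div_pos.2 hp)).1 h.2
  exact (ENNReal.summable_toReal tsum_lt_top.ne).congr fun n =>
    ENNReal.toReal_ofReal (Real.rpow_nonneg (sval_nonneg T n) p)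

variable [CompleteSpace E]

-- Approximating `T` in dyadic ranks loses nothing, because by Cauchy condensation
-- `∑ 2 ^ n * sval T (2 ^ n)` converges together with `∑ sval T n`.
theorem isNuclear_of_summable_sval (h : Summable (sval T)) : IsNuclear T := by
  have condensed : Summable fun n : ℕ => (2 : ℝ) ^ n * sval T (2 ^ n) :=
    (summable_condensed_iff_of_nonneg (sval_nonneg T) fun _ _ _ hmn => sval_antitone T hmn).2 h
  choose R hrank hR using fun n : ℕ =>
    exists_rank_le_norm_sub_lt T (2 ^ n) (δ := (1 / 4) ^ n) (by positivity)
  refine isNuclear_of_rank_le_two_pow (R := fun | 0 => 0 | n + 1 => R n) rfl (fun n => ?_) ?_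
  · cases n with
    | zero => simp
    | succ n => exact (hrank n).trans (mod_cast Nat.pow_le_pow_right two_pos n.le_succ)
  · refine (summable_nat_add_iff 1).1 (.of_nonneg_of_le (fun n => by positivity) (fun n => ?_)
      ((condensed.add summable_geometric_two).mul_left 2))
    calc (2 : ℝ) ^ (n + 1) * ‖T - R n‖
        ≤ 2 ^ (n + 1) * (sval T (2 ^ n) + (1 / 4) ^ n) := by gcongr; exact (hR n).le
      _ = 2 * (2 ^ n * sval T (2 ^ n) + (2 * (1 / 4)) ^ n) := by rw [mul_pow]; ring
      _ = 2 * (2 ^ n * sval T (2 ^ n) + (1 / 2) ^ n) := by norm_num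

theorem MemSchatten.isNuclear (h : MemSchatten 1 T) : IsNuclear T :=
  isNuclear_of_summable_sval (by simpa only [Real.rpow_one] using h.summable_sval_rpow one_pos)

end SingularValues

theorem commute_mul_of_anticommute {S : Type*} [Semigroup S] [HasDistribNeg S] {a b c : S}
    (hab : a * b = -(b * a)) (hac : a * c = -(c * a)) : Commute a (b * c) :=
  calc a * (b * c) = -(b * (a * c)) := by rw [← mul_assoc, hab, neg_mul, mul_assoc]
    _ = b * c * a := by rw [hac, mul_neg, neg_neg, mul_assoc]

theorem trs_odd_eq_zero_general (ε F θ : H →L[ℂ] H) (hFε : F * ε = -(ε * F))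
    (hodd : ε * θ = -(θ * ε)) (htc : MemSchatten 1 (F * θ + θ * F)) :
    (2 : ℂ)⁻¹ * opTrace (ε * F * (F * θ + θ * F)) = 0 := by
  set C := F * θ + θ * F
  have hεF : ε * F = -(F * ε) := by rw [hFε, neg_neg]
  have hεC : Commute ε C :=
    (commute_mul_of_anticommute hεF hodd).add_right (commute_mul_of_anticommute hodd hεF)
  have nuclear_FC : IsNuclear (F * C) := htc.isNuclear.clm_comp F
  have trace_eq_neg : opTrace (ε * F * C) = -opTrace (ε * F * C) :=
    calc opTrace (ε * F * C) = opTrace (F * C * ε) := by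
          rw [mul_assoc, nuclear_FC.opTrace_mul_comm]
      _ = opTrace (-(ε * F * C)) := by rw [mul_assoc, ← hεC.eq, ← mul_assoc, hFε, neg_mul]
      _ = -opTrace (ε * F * C) := opTrace_neg _
  rw [self_eq_neg.mp trace_eq_neg, mul_zero]

/-- For a ℤ₂-graded Hilbert space `(H, ε)` and `F` bounded with `F² = 1`, `Fε = -εF`:
if `θ` is a bounded odd operator (`εθ = -θε`) such that the graded commutator
`[F,θ] = Fθ + θF` is trace class, then `Tr_s(θ) = (1/2)·Trace(εF[F,θ]) = 0`. -/
theorem trs_odd_eq_zero (ε F : H →L[ℂ] H) (hε : IsSelfAdjoint ε) (hε2 : ε * ε = 1)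
    (hF2 : F * F = 1) (hFε : F * ε = -(ε * F)) (θ : H →L[ℂ] H)
    (hodd : ε * θ = -(θ * ε)) (htc : MemSchatten 1 (F * θ + θ * F)) :
    (2 : ℂ)⁻¹ * opTrace (ε * F * (F * θ + θ * F)) = 0 := 
  trs_odd_eq_zero_general ε F θ hFε hodd htc
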